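/- Let p_1 be a maximal element and p_2 a minimal element of a finite poset P (p_1 ≠ p_2), with λ(P - {p_1}) = λ(P - {p_2}) = λ(P) - {B} and λ(P - {p_1, p_2}) = λ(P) - {A, B}. Then the column x_B of B and the column x_A of A satisfy x_A ≤ x_B ≤ x_A + 1. -/

import Mathlib

open Finset

/-- `cMax α k` is the maximal cardinality of a union of `k` pairwise disjoint chains
in the finite poset `α`. -/
noncomputable def cMax (α : Type*) [PartialOrder α] [Fintype α] [DecidableEq α] (k : ℕ) : ℕ :=
  sSup {n : ℕ | ∃ f : Fin k → Finset α,
    (∀ i, IsChain (· ≤ ·) (↑(f i) : Set α)) ∧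
    Pairwise (Function.onFun Disjoint f) ∧
    n = (Finset.univ.biUnion f).card}

/-- `aMax α k` is the maximal cardinality of a union of `k` pairwise disjoint antichains
in the finite poset `α`. -/
noncomputable def aMax (α : Type*) [PartialOrder α] [Fintype α] [DecidableEq α] (k : ℕ) : ℕ :=
  sSup {n : ℕ | ∃ f : Fin k → Finset α,
    (∀ i, IsAntichain (· ≤ ·) (↑(f i) : Set α)) ∧
    Pairwise (Function.onFun Disjoint f) ∧
    n = (Finset.univ.biUnion f).card}

/-- The `k`-th row length of the Greene shape `λ(α)`. -/
noncomputable def lam (α : Type*) [PartialOrder α] [Fintype α] [DecidableEq α] (k : ℕ) : ℕ :=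
  cMax α k - cMax α (k - 1)

/-- The `k`-th column length of the Greene shape, `μ_k = a_k - a_{k-1}`. -/
noncomputable def mu (α : Type*) [PartialOrder α] [Fintype α] [DecidableEq α] (k : ℕ) : ℕ :=
  aMax α k - aMax α (k - 1)

/-- Dual feasible pairs. -/
def Feas {β : Type*} [PartialOrder β] (j : ℤ) (u v : β → ℤ) : Prop :=
  (∀ x, 0 ≤ u x) ∧ (∀ x, v x ≤ j) ∧ (∀ x, v x ≤ u x + 1) ∧ ∀ x y, x < y → v x ≤ u y

/-- Values of dual feasible pairs. -/
def Vals (β : Type*) [PartialOrder β] [Fintype β] (j : ℤ) : Set ℤ :=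
  {z | ∃ u v : β → ℤ, Feas j u v ∧ z = ∑ x, (v x - u x)}

lemma int_greatest {S : Set ℤ} (hne : S.Nonempty) (b : ℤ) (hb : ∀ z ∈ S, z ≤ b) :
    ∃ m, IsGreatest S m := by
  obtain ⟨m, hm, h⟩ := Int.exists_greatest_of_bdd (P := fun z => z ∈ S) ⟨b, hb⟩ hne
  exact ⟨m, hm, h⟩

lemma vals_le_card {β : Type*} [PartialOrder β] [Fintype β] {j z : ℤ} (hz : z ∈ Vals β j) :
    z ≤ Fintype.card β := by
  obtain ⟨u, v, h, rfl⟩ := hz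
  calc ∑ x, (v x - u x) ≤ ∑ x : β, (1 : ℤ) :=
        Finset.sum_le_sum fun x _ => by have := h.2.2.1 x; linarith
    _ = _ := by simp

lemma feas_zero {β : Type*} [PartialOrder β] {j : ℤ} (hj : 0 ≤ j) :
    Feas j (fun _ : β => 0) (fun _ => 0) :=
  ⟨fun _ => le_rfl, fun _ => hj, fun _ => by norm_num, fun _ _ _ => le_rfl⟩

lemma exists_greatest {β : Type*} [PartialOrder β] [Fintype β] {j : ℤ} (hj : 0 ≤ j) :
    ∃ m, IsGreatest (Vals β j) m :=
  int_greatest ⟨_, _, _, feas_zero hj, rfl⟩ (Fintype.card β) fun _ => vals_le_card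

/-- meet and join -/
lemma feas_inf {β : Type*} [PartialOrder β] {j k : ℤ} {u v u' v' : β → ℤ}
    (h : Feas j u v) (h' : Feas k u' v') :
    Feas (min j k) (fun x => min (u x) (u' x)) (fun x => min (v x) (v' x)) := by
  obtain ⟨a, b, c, d⟩ := h
  obtain ⟨a', b', c', d'⟩ := h'
  refine ⟨fun x => ?_, fun x => ?_, fun x => ?_, fun x y hxy => ?_⟩
  · have := a x; have := a' x; dsimp only; omega
  · have := b x; have := b' x; dsimp only; omega
  · have := c x; have := c' x; dsimp only; omega
  · have := d x y hxy; have := d' x y hxy; dsimp only; omega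

lemma feas_sup {β : Type*} [PartialOrder β] {j k : ℤ} {u v u' v' : β → ℤ}
    (h : Feas j u v) (h' : Feas k u' v') :
    Feas (max j k) (fun x => max (u x) (u' x)) (fun x => max (v x) (v' x)) := by
  obtain ⟨a, b, c, d⟩ := h
  obtain ⟨a', b', c', d'⟩ := h'
  refine ⟨fun x => ?_, fun x => ?_, fun x => ?_, fun x y hxy => ?_⟩
  · have := a x; have := a' x; dsimp only; omega
  · have := b x; have := b' x; dsimp only; omega
  · have := c x; have := c' x; dsimp only; omega
  · have := d x y hxy; have := d' x y hxy; dsimp only; omega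

lemma sum_inf_sup {β : Type*} [Fintype β] (u v u' v' : β → ℤ) :
    ∑ x, (min (v x) (v' x) - min (u x) (u' x)) + ∑ x, (max (v x) (v' x) - max (u x) (u' x))
      = ∑ x, (v x - u x) + ∑ x, (v' x - u' x) := by
  rw [← Finset.sum_add_distrib, ← Finset.sum_add_distrib]
  refine Finset.sum_congr rfl fun x _ => ?_
  omega

lemma concave_a {β : Type*} [PartialOrder β] [Fintype β] {j : ℤ} {a₀ a₁ a₂ : ℤ}
    (h₀ : IsGreatest (Vals β j) a₀) (h₁ : IsGreatest (Vals β (j+1)) a₁)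
    (h₂ : IsGreatest (Vals β (j+2)) a₂) : a₀ + a₂ ≤ 2 * a₁ := by
  obtain ⟨u, v, h, rfl⟩ := h₀.1
  obtain ⟨u', v', h', rfl⟩ := h₂.1
  have e := sum_inf_sup (fun x => u x + 1) (fun x => v x + 1) u' v'
  obtain ⟨a, b, c, d⟩ := h
  obtain ⟨a', b', c', d'⟩ := h'
  have f1 : Feas (j+1) (fun x => min (u x + 1) (u' x)) (fun x => min (v x + 1) (v' x)) := by
    refine ⟨fun x => ?_, fun x => ?_, fun x => ?_, fun x y hxy => ?_⟩
    · have := a x; have := a' x; dsimp only; omega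
    · have := b x; have := b' x; dsimp only; omega
    · have := c x; have := c' x; dsimp only; omega
    · have := d x y hxy; have := d' x y hxy; dsimp only; omega
  have f2 : Feas (j+1) (fun x => max (u x + 1) (u' x) - 1) (fun x => max (v x + 1) (v' x) - 1) := by
    refine ⟨fun x => ?_, fun x => ?_, fun x => ?_, fun x y hxy => ?_⟩
    · have := a x; have := a' x; dsimp only; omega
    · have := b x; have := b' x; dsimp only; omega
    · have := c x; have := c' x; dsimp only; omega
    · have := d x y hxy; have := d' x y hxy; dsimp only; omega
  have g1 := h₁.2 ⟨_, _, f1, rfl⟩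
  have g2 := h₁.2 ⟨_, _, f2, rfl⟩
  simp only [sub_sub_sub_cancel_right, add_sub_add_right_eq_sub] at g2 e
  linarith

lemma mono_a {β : Type*} [PartialOrder β] [Fintype β] {j k : ℤ} (hjk : j ≤ k) {a₀ a₁ : ℤ}
    (h₀ : IsGreatest (Vals β j) a₀) (h₁ : IsGreatest (Vals β k) a₁) : a₀ ≤ a₁ := by
  obtain ⟨u, v, h, rfl⟩ := h₀.1
  exact h₁.2 ⟨u, v, ⟨h.1, fun x => (h.2.1 x).trans hjk, h.2.2⟩, rfl⟩

lemma chain_le {β : Type*} [PartialOrder β] [DecidableEq β] {j : ℤ} {u v : β → ℤ}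
    (h : Feas j u v) :
    ∀ (m : ℕ) (C : Finset β), C.card = m → IsChain (· ≤ ·) (C : Set β) → ∀ b : ℤ, 0 ≤ b →
      (∀ x ∈ C, v x ≤ b) → ∑ x ∈ C, (v x - u x) ≤ b := by
  intro m
  induction m with
  | zero =>
    intro C hC _ b hb _
    rw [Finset.card_eq_zero] at hC
    subst hC
    simpa using hb
  | succ m ih =>
    intro C hC hch b hb hv
    have hne : C.Nonempty := by rw [← Finset.card_pos]; omega
    obtain ⟨M, hM⟩ := C.exists_maximal hne
    have hMC : M ∈ C := hM.1
    have key := ih (C.erase M) (by rw [Finset.card_erase_of_mem hMC]; omega)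
      (hch.mono (by simp)) (u M) (h.1 M) (by
        intro x hx
        have hx' := Finset.mem_erase.1 hx
        apply h.2.2.2
        rcases hch (Finset.mem_coe.2 hx'.2) (Finset.mem_coe.2 hMC) hx'.1 with h1 | h1
        · exact lt_of_le_of_ne h1 hx'.1
        · exact absurd (le_antisymm (hM.2 hx'.2 h1) h1) hx'.1)
    rw [← Finset.add_sum_erase _ _ hMC]
    have := hv M hMC
    linarith

lemma weak {β : Type*} [PartialOrder β] [Fintype β] [DecidableEq β] {j : ℤ} (hj : 0 ≤ j)
    {u v : β → ℤ} (h : Feas j u v) (k : ℕ) (f : Fin k → Finset β)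
    (hf : ∀ i, IsChain (· ≤ ·) (↑(f i) : Set β)) (hd : Pairwise (Function.onFun Disjoint f)) :
    ∑ x, (v x - u x) ≤ j * k + Fintype.card β - (Finset.univ.biUnion f).card := by
  rw [← Finset.sum_add_sum_compl (Finset.univ.biUnion f)]
  have h1 : ∑ x ∈ Finset.univ.biUnion f, (v x - u x) ≤ j * k := by
    rw [Finset.sum_biUnion (fun a _ b _ hab => hd hab)]
    calc _ ≤ ∑ i : Fin k, j :=
          Finset.sum_le_sum fun i _ => chain_le h _ (f i) rfl (hf i) j hj fun x _ => h.2.1 x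
      _ = _ := by simp [mul_comm]
  have h2 : ∑ x ∈ (Finset.univ.biUnion f)ᶜ, (v x - u x) ≤ ((Finset.univ.biUnion f)ᶜ.card : ℤ) := by
    calc _ ≤ ∑ x ∈ (Finset.univ.biUnion f)ᶜ, (1 : ℤ) :=
          Finset.sum_le_sum fun x _ => by have := h.2.2.1 x; linarith
      _ = _ := by simp
  have h3 := Finset.card_add_card_compl (Finset.univ.biUnion f)
  have : ((Finset.univ.biUnion f).card : ℤ) + ((Finset.univ.biUnion f)ᶜ.card : ℤ)
    = Fintype.card β := by exact_mod_cast h3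
  linarith

lemma cset_bdd (β : Type*) [PartialOrder β] [Fintype β] [DecidableEq β] (k : ℕ) :
    BddAbove {n : ℕ | ∃ f : Fin k → Finset β,
    (∀ i, IsChain (· ≤ ·) (↑(f i) : Set β)) ∧
    Pairwise (Function.onFun Disjoint f) ∧
    n = (Finset.univ.biUnion f).card} := by
  refine ⟨Fintype.card β, ?_⟩
  rintro n ⟨f, _, _, rfl⟩
  exact Finset.card_le_univ _

lemma cMax_spec (β : Type*) [PartialOrder β] [Fintype β] [DecidableEq β] (k : ℕ) :
    ∃ f : Fin k → Finset β,
    (∀ i, IsChain (· ≤ ·) (↑(f i) : Set β)) ∧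
    Pairwise (Function.onFun Disjoint f) ∧
    cMax β k = (Finset.univ.biUnion f).card := by
  refine Nat.sSup_mem (s := {n : ℕ | ∃ f : Fin k → Finset β,
    (∀ i, IsChain (· ≤ ·) (↑(f i) : Set β)) ∧
    Pairwise (Function.onFun Disjoint f) ∧
    n = (Finset.univ.biUnion f).card}) ?_ (cset_bdd β k)
  refine ⟨_, fun _ => ∅, fun i => by simp, fun i j _ => Finset.disjoint_empty_left _, rfl⟩

lemma le_cMax {β : Type*} [PartialOrder β] [Fintype β] [DecidableEq β] {k : ℕ}
    (f : Fin k → Finset β) (hf : ∀ i, IsChain (· ≤ ·) (↑(f i) : Set β))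
    (hd : Pairwise (Function.onFun Disjoint f)) :
    (Finset.univ.biUnion f).card ≤ cMax β k :=
  le_csSup (cset_bdd β k) ⟨f, hf, hd, rfl⟩

/-- Egervary-type lemma. -/
lemma egervary {L : Type*} [Fintype L] [DecidableEq L] (al : L → L → Prop) (w : L → L → ℤ)
    (V U : L → ℤ) (hF : ∀ l r, al l r → V l ≤ U r + w l r)
    (hmax : ∀ V' U' : L → ℤ, (∀ l r, al l r → V' l ≤ U' r + w l r) →
      ∑ l, (V' l - U' l) ≤ ∑ l, (V l - U l)) :
    ∃ M : L → L, Function.Bijective M ∧ ∀ l, al l (M l) ∧ V l = U (M l) + w l (M l) := by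
  classical
  let t : L → Finset L := fun l => Finset.univ.filter fun r => al l r ∧ V l = U r + w l r
  have hall : ∀ S : Finset L, S.card ≤ (S.biUnion t).card := by
    intro S
    have := hmax (fun l => V l + if l ∈ S then 1 else 0)
      (fun r => U r + if r ∈ S.biUnion t then 1 else 0) (by
        intro l r hlr
        have h0 := hF l r hlr
        by_cases hl : l ∈ S
        · by_cases hr : r ∈ S.biUnion t
          · simp only [hl, hr, if_true]; linarith
          · have hne : V l ≠ U r + w l r := by
              intro he
              exact hr (Finset.mem_biUnion.2 ⟨l, hl, by simp [t, hlr, he]⟩)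
            simp only [hl, hr, if_true, if_false]
            omega
        · simp only [hl, if_false]
          split_ifs <;> linarith)
    simp only [Finset.sum_sub_distrib, Finset.sum_add_distrib, Finset.sum_ite_mem,
      Finset.univ_inter, Finset.sum_const, smul_eq_mul, mul_one, nsmul_eq_mul] at this
    have h2 : (S.card : ℤ) ≤ ((S.biUnion t).card : ℤ) := by linarith
    exact_mod_cast h2
  obtain ⟨M, hinj, hM⟩ := (Finset.all_card_le_biUnion_card_iff_exists_injective t).1 hall
  refine ⟨M, Finite.injective_iff_bijective.1 hinj, fun l => ?_⟩
  have := hM l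
  simpa [t] using this

/-- The label of the chain to which an element belongs. -/
inductive Lab {β : Type*} {k : ℕ} (M : β ⊕ Fin k → β ⊕ Fin k) (i : Fin k) : β → Prop
  | base (x : β) : M (Sum.inr i) = Sum.inl x → Lab M i x
  | step (y x : β) : Lab M i y → M (Sum.inl y) = Sum.inl x → Lab M i x

lemma lab_unique {β : Type*} {k : ℕ} {M : β ⊕ Fin k → β ⊕ Fin k} (hM : Function.Injective M)
    {i i' : Fin k} {x : β} (h : Lab M i x) : Lab M i' x → i = i' := by
  induction h with
  | base x h =>
    intro h'
    cases h' with
    | base _ h' => simpa using hM (h.trans h'.symm)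
    | step y _ _ h' => simpa using hM (h.trans h'.symm)
  | step y x _ h ih =>
    intro h'
    cases h' with
    | base _ h' => simpa using hM (h.trans h'.symm)
    | step y' _ hy h' =>
      have : y = y' := by simpa using hM (h.trans h'.symm)
      subst this
      exact ih hy

lemma lab_comp {β : Type*} {k : ℕ} {M : β ⊕ Fin k → β ⊕ Fin k} (hM : Function.Injective M)
    {i : Fin k} {x y : β} (h : Lab M i x) (hy : Lab M i y) :
    Relation.ReflTransGen (fun a b => M (Sum.inl a) = Sum.inl b) x y ∨
    Relation.ReflTransGen (fun a b => M (Sum.inl a) = Sum.inl b) y x := by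
  induction h with
  | base x h =>
    left
    induction hy with
    | base y h' =>
      have : x = y := by simpa using h.symm.trans h'
      subst this
      exact .refl
    | step y' y _ h' ih => exact ih.tail h'
  | step x' x _ h ih =>
    rcases ih with ih | ih
    · rcases Relation.ReflTransGen.cases_head ih with rfl | ⟨z, hz, hzy⟩
      · exact Or.inr (.single h)
      · have : x = z := by simpa using h.symm.trans hz
        subst this
        exact Or.inl hzy
    · exact Or.inr (ih.tail h)

lemma chains_of_matching {β : Type*} [PartialOrder β] [Fintype β] [DecidableEq β] {k : ℕ}
    (M : β ⊕ Fin k → β ⊕ Fin k) (hM : Function.Bijective M)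
    (hle : ∀ x y, M (Sum.inl x) = Sum.inl y → x ≤ y) :
    (Finset.univ.filter fun x => M (Sum.inl x) ≠ Sum.inl x).card ≤ cMax β k := by
  classical
  refine le_trans ?_ (le_cMax (fun i => Finset.univ.filter fun x => Lab M i x) ?_ ?_)
  · apply Finset.card_le_card
    intro x hx
    have hx : M (Sum.inl x) ≠ Sum.inl x := by simpa using hx
    simp only [Finset.mem_biUnion, Finset.mem_univ, true_and, Finset.mem_filter]
    induction x using WellFoundedLT.induction with
    | ind x ih =>
    obtain ⟨z, hz⟩ := hM.2 (Sum.inl x)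
    rcases z with y | i
    · have hyx : y ≠ x := by rintro rfl; exact hx hz
      have hy : M (Sum.inl y) ≠ Sum.inl y := by rw [hz]; simpa using hyx.symm
      obtain ⟨i, hi⟩ := ih y (lt_of_le_of_ne (hle _ _ hz) hyx) (by simpa using hy) hy
      exact ⟨i, .step y x hi hz⟩
    · exact ⟨i, .base x hz⟩
  · intro i x hx y hy _
    have hx : Lab M i x := by simpa using hx
    have hy : Lab M i y := by simpa using hy
    have aux : ∀ a b, Relation.ReflTransGen (fun a b => M (Sum.inl a) = Sum.inl b) a b → a ≤ b := by
      intro a b hab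
      induction hab with
      | refl => exact le_rfl
      | tail _ h ih => exact ih.trans (hle _ _ h)
    exact (lab_comp hM.1 hx hy).imp (aux _ _) (aux _ _)
  · intro i i' hne
    simp only [Function.onFun]
    rw [Finset.disjoint_left]
    intro x hx hx'
    have hx : Lab M i x := by simpa using hx
    have hx' : Lab M i' x := by simpa using hx'
    exact hne (lab_unique hM.1 hx hx')

/-- allowed edges -/
def Al {β : Type*} [PartialOrder β] {k : ℕ} : β ⊕ Fin k → β ⊕ Fin k → Prop
  | Sum.inl x, Sum.inl y => x ≤ y
  | _, _ => True

open Classical in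
/-- costs -/
noncomputable def Wt {β : Type*} [PartialOrder β] {k : ℕ} : β ⊕ Fin k → β ⊕ Fin k → ℤ
  | Sum.inl x, Sum.inl y => if x = y then 1 else 0
  | _, _ => 0

lemma fin_bound {k : ℕ} (f : Fin k → ℤ) (lo : ℤ) (hlo : ∀ i, lo ≤ f i) :
    ∃ t, (∀ i, t ≤ f i) ∧ (t = lo ∨ ∃ i, t = f i) := by
  rcases isEmpty_or_nonempty (Fin k) with h | h
  · exact ⟨lo, hlo, Or.inl rfl⟩
  · obtain ⟨i, hi⟩ := Finite.exists_min f
    exact ⟨f i, hi, Or.inr ⟨i, rfl⟩⟩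

lemma strong (β : Type*) [PartialOrder β] [Fintype β] [DecidableEq β] (k : ℕ) :
    ∃ j : ℕ, ∃ u v : β → ℤ, Feas j u v ∧
      (j : ℤ) * k + Fintype.card β - cMax β k ≤ ∑ x, (v x - u x) := by
  classical
  let T : Set ℤ := {z | ∃ V U : β ⊕ Fin k → ℤ, (∀ l r, Al l r → V l ≤ U r + Wt l r) ∧
    z = ∑ l, (V l - U l)}
  obtain ⟨m, ⟨V, U, hF, rfl⟩, hm⟩ : ∃ m, IsGreatest T m := by
    refine int_greatest ⟨0, fun _ => 0, fun _ => 0, ?_, by simp⟩ (Fintype.card (β ⊕ Fin k)) ?_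
    · rintro (l|l) (r|r) _ <;> simp [Wt]
      split_ifs <;> simp
    · rintro z ⟨V, U, hF, rfl⟩
      calc ∑ l, (V l - U l) ≤ ∑ l : β ⊕ Fin k, (1 : ℤ) := by
            refine Finset.sum_le_sum fun l _ => ?_
            rcases l with l | l
            · have := hF (.inl l) (.inl l) (by simp [Al]); simp [Wt] at this; linarith
            · have := hF (.inr l) (.inr l) (by simp [Al]); simp [Wt] at this; linarith
        _ = _ := by simp
  obtain ⟨M, hMb, hM⟩ := egervary Al Wt V U hF fun V' U' h => hm ⟨V', U', h, rfl⟩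
  have hval : ∑ l, (V l - U l)
      = ((Finset.univ.filter fun x : β => M (Sum.inl x) = Sum.inl x).card : ℤ) := by
    have e1 : ∑ l, U (M l) = ∑ l, U l := Function.Bijective.sum_comp hMb U
    rw [Finset.sum_sub_distrib, ← e1, ← Finset.sum_sub_distrib]
    have e2 : ∀ l, V l - U (M l) = Wt l (M l) := fun l => by rw [(hM l).2]; ring
    simp only [e2]
    rw [Fintype.sum_sum_type]
    have e3 : ∀ i : Fin k, Wt (Sum.inr i) (M (Sum.inr i) : β ⊕ Fin k) = 0 := fun i => by simp [Wt]
    simp only [e3, Finset.sum_const_zero, add_zero]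
    rw [Finset.card_filter]
    push_cast
    refine Finset.sum_congr rfl fun x _ => ?_
    rcases hx : M (Sum.inl x) with y | i
    · simp [Wt, eq_comm]
    · simp [Wt]
  have hch := chains_of_matching M hMb (fun x y h => by
    have := (hM (Sum.inl x)).1
    rw [h] at this
    exact this)
  have hcard : ((Finset.univ.filter fun x : β => M (Sum.inl x) = Sum.inl x).card : ℤ)
      + ((Finset.univ.filter fun x : β => M (Sum.inl x) ≠ Sum.inl x).card : ℤ)
      = Fintype.card β := by
    exact_mod_cast Finset.card_filter_add_card_filter_not (s := (Finset.univ : Finset β))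
      (fun x : β => M (Sum.inl x) = Sum.inl x)
  -- uniform source and sink potentials
  obtain ⟨s, t, hst, hs, ht, hsu, hvt⟩ : ∃ s t : ℤ, s ≤ t ∧ (∀ i : Fin k, V (.inr i) ≤ s) ∧
      (∀ i : Fin k, t ≤ U (.inr i)) ∧ (∀ x : β, s ≤ U (.inl x)) ∧
      (∀ x : β, V (.inl x) ≤ t) := by
    rcases Nat.eq_zero_or_pos k with hk | hk
    · subst hk
      obtain ⟨a, ha⟩ := (Set.finite_range U).bddBelow
      obtain ⟨b, hb⟩ := (Set.finite_range V).bddAbove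
      refine ⟨min a b, b, min_le_right _ _, fun i => i.elim0, fun i => i.elim0,
        fun x => (min_le_left _ _).trans (ha ⟨_, rfl⟩), fun x => hb ⟨_, rfl⟩⟩
    · haveI : Nonempty (Fin k) := ⟨⟨0, hk⟩⟩
      obtain ⟨i, hi⟩ := Finite.exists_max (fun i : Fin k => V (.inr i))
      obtain ⟨i', hi'⟩ := Finite.exists_min (fun i : Fin k => U (.inr i))
      refine ⟨V (.inr i), U (.inr i'), ?_, hi, hi', fun x => ?_, fun x => ?_⟩
      · simpa [Wt] using hF (.inr i) (.inr i') (by simp [Al])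
      · simpa [Wt] using hF (.inr i) (.inl x) (by simp [Al])
      · simpa [Wt] using hF (.inl x) (.inr i') (by simp [Al])
  refine ⟨(t - s).toNat, fun x => U (.inl x) - s, fun x => V (.inl x) - s, ?_, ?_⟩
  · rw [Int.toNat_of_nonneg (by omega)]
    refine ⟨fun x => ?_, fun x => ?_, fun x => ?_, fun x y hxy => ?_⟩
    · have := hsu x; dsimp only; omega
    · have := hvt x; dsimp only; omega
    · have := hF (.inl x) (.inl x) (by simp [Al]); simp [Wt] at this; dsimp only; omega
    · have := hF (.inl x) (.inl y) (by simpa [Al] using hxy.le)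
      simp [Wt, hxy.ne] at this; dsimp only; omega
  · rw [Int.toNat_of_nonneg (by omega)]
    rw [Fintype.sum_sum_type] at hval
    have h4 : ∑ i : Fin k, (V (.inr i) - U (.inr i)) ≤ ∑ i : Fin k, (s - t) :=
      Finset.sum_le_sum fun i _ => by have := hs i; have := ht i; omega
    simp only [Finset.sum_const, Finset.card_univ, Fintype.card_fin, nsmul_eq_mul] at h4
    simp only [sub_sub_sub_cancel_right]
    have : ((Finset.univ.filter fun x : β => M (Sum.inl x) ≠ Sum.inl x).card : ℤ) ≤ cMax β k := by
      exact_mod_cast hch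
    nlinarith

lemma concave_super (a : ℕ → ℤ) (hc : ∀ j, a j + a (j+2) ≤ 2 * a (j+1)) (j j' : ℕ) :
    a j' - a j ≤ ((j':ℤ) - j) * (a (j+1) - a j) := by
  have anti : Antitone fun i => a (i+1) - a i := antitone_nat_of_succ_le fun i => by
    have := hc i; simp only [add_assoc]; norm_num; linarith
  rcases le_total j j' with h | h
  · obtain ⟨d, rfl⟩ := Nat.exists_eq_add_of_le h
    induction d with
    | zero => simp
    | succ d ih =>
      have h1 := ih (by omega)
      have h2 := anti (show j ≤ j + d by omega)
      simp only at h2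
      push_cast at h1 ⊢
      rw [← add_assoc]
      nlinarith
  · obtain ⟨d, rfl⟩ := Nat.exists_eq_add_of_le h
    clear h
    generalize hm : a (j' + d + 1) - a (j'+d) = m
    have key : ∀ e, e ≤ d → (e : ℤ) * m ≤ a (j' + d) - a (j' + d - e) := by
      intro e
      induction e with
      | zero => simp
      | succ e ih =>
        intro he
        have h1 := ih (by omega)
        have h2 := anti (show j' + d - (e+1) ≤ j' + d by omega)
        simp only at h2
        rw [show j' + d - (e+1) + 1 = j' + d - e by omega, hm] at h2
        push_cast
        linarith
    have := key d le_rfl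
    rw [Nat.add_sub_cancel] at this
    push_cast
    linarith

lemma sum_min_exists (c : ℕ → ℤ) (hc : ∀ j, c j + c (j+2) ≤ 2 * c (j+1)) (j : ℤ) (N : ℕ) :
    ∃ k ≤ N, ∑ i ∈ Finset.range N, min (c (i+1) - c i) j = j * k + c N - c k := by
  have anti : Antitone fun i => c (i+1) - c i := antitone_nat_of_succ_le fun i => by
    have := hc i; simp only [add_assoc]; norm_num; linarith
  by_cases h : ∀ i < N, j ≤ c (i+1) - c i
  · refine ⟨N, le_rfl, ?_⟩
    rw [Finset.sum_congr rfl fun i hi => min_eq_right (h i (Finset.mem_range.1 hi))]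
    simp [mul_comm]
  · push Not at h
    let k := Nat.find h
    obtain ⟨hkN, hk⟩ := Nat.find_spec h
    have hlt : ∀ i < k, j ≤ c (i+1) - c i := fun i hi => by
      have := Nat.find_min h hi
      push Not at this
      exact this (hi.trans hkN)
    refine ⟨k, hkN.le, ?_⟩
    rw [← Finset.sum_range_add_sum_Ico _ hkN.le,
      Finset.sum_congr rfl fun i hi => min_eq_right (hlt i (Finset.mem_range.1 hi)),
      Finset.sum_congr rfl fun i hi => min_eq_left
        ((anti (Finset.mem_Ico.1 hi).1).trans hk.le), Finset.sum_Ico_eq_sub _ hkN.le]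
    simp only [Finset.sum_range_sub]
    simp [mul_comm, k]
    ring

lemma sum_min_le (c : ℕ → ℤ) (j : ℤ) (N k : ℕ) (hk : k ≤ N) :
    ∑ i ∈ Finset.range N, min (c (i+1) - c i) j ≤ j * k + c N - c k := by
  rw [← Finset.sum_range_add_sum_Ico _ hk]
  have h1 : ∑ i ∈ Finset.range k, min (c (i+1) - c i) j ≤ ∑ i ∈ Finset.range k, j :=
    Finset.sum_le_sum fun _ _ => min_le_right _ _
  have h2 : ∑ i ∈ Finset.Ico k N, min (c (i+1) - c i) j ≤ ∑ i ∈ Finset.Ico k N, (c (i+1) - c i) :=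
    Finset.sum_le_sum fun _ _ => min_le_left _ _
  rw [Finset.sum_Ico_eq_sub (fun i => c (i+1) - c i) hk] at h2
  simp only [Finset.sum_range_sub, Finset.sum_const, Finset.card_range, nsmul_eq_mul] at h1 h2
  linarith

lemma conj (a c : ℕ → ℤ) (n : ℕ) (ha0 : a 0 = 0) (han : ∀ j, a j ≤ n) (ham : Monotone a)
    (hac : ∀ j, a j + a (j+2) ≤ 2 * a (j+1))
    (hw : ∀ j k : ℕ, a j ≤ j * k + n - c k)
    (hs : ∀ k : ℕ, ∃ j : ℕ, j * k + n - c k ≤ a j) (N : ℕ) (hN : n ≤ N) (j : ℕ) :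
    ∑ i ∈ Finset.range N, min (c (i+1) - c i) j = a j := by
  have hcN : c N = n := by
    apply le_antisymm
    · have := hw 0 N; rw [ha0] at this; push_cast at this; linarith
    · obtain ⟨j, hj⟩ := hs N
      rcases Nat.eq_zero_or_pos j with h | h
      · subst h; rw [ha0] at hj; push_cast at hj; linarith
      · have h1 := han j
        have : (n : ℤ) ≤ j * N := by
          have : n ≤ j * N := hN.trans (Nat.le_mul_of_pos_left N h)
          exact_mod_cast this
        linarith
  have hcc : ∀ k, c k + c (k+2) ≤ 2 * c (k+1) := by
    intro k
    obtain ⟨j, hj⟩ := hs (k+1)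
    have h1 := hw j k
    have h2 := hw j (k+2)
    push_cast at *
    linarith
  apply le_antisymm
  · have hm0 : 0 ≤ a (j+1) - a j := sub_nonneg.2 (ham (Nat.le_succ j))
    obtain ⟨k, hk⟩ := Int.eq_ofNat_of_zero_le hm0
    have hkN : k ≤ N := by
      have := han (j+1)
      have : a 0 ≤ a j := ham (Nat.zero_le j)
      omega
    have h1 := sum_min_le c j N k hkN
    obtain ⟨j', hj'⟩ := hs k
    have h2 := concave_super a hac j j'
    rw [hk] at h2
    rw [hcN] at h1
    nlinarith
  · obtain ⟨k, -, hk⟩ := sum_min_exists c hcc j N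
    rw [hk, hcN]
    exact hw j k

lemma cMax_weak {β : Type*} [PartialOrder β] [Fintype β] [DecidableEq β] {j : ℤ} (hj : 0 ≤ j)
    {z : ℤ} (hz : z ∈ Vals β j) (k : ℕ) : z ≤ j * k + Fintype.card β - cMax β k := by
  obtain ⟨u, v, h, rfl⟩ := hz
  obtain ⟨f, hf, hd, he⟩ := cMax_spec β k
  rw [he]
  exact weak hj h k f hf hd

/-- Greene duality in the form we need. -/
lemma greene (β : Type*) [PartialOrder β] [Fintype β] [DecidableEq β] (N : ℕ)
    (hN : Fintype.card β ≤ N) (j : ℕ) :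
    IsGreatest (Vals β j) (∑ i ∈ Finset.range N, min (lam β (i+1) : ℤ) j) := by
  have hex : ∀ j : ℕ, ∃ m, IsGreatest (Vals β j) m := fun j => exists_greatest (by positivity)
  choose a ha using hex
  have hw : ∀ j k : ℕ, a j ≤ j * k + Fintype.card β - cMax β k := fun j k =>
    cMax_weak (by positivity) (ha j).1 k
  have hs : ∀ k : ℕ, ∃ j : ℕ, (j : ℤ) * k + Fintype.card β - cMax β k ≤ a j := fun k => by
    obtain ⟨j, u, v, h, hle⟩ := strong β k
    exact ⟨j, hle.trans ((ha j).2 ⟨u, v, h, rfl⟩)⟩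
  have hmono : ∀ k, cMax β k ≤ cMax β (k+1) := fun k => by
    obtain ⟨j, hj⟩ := hs (k+1)
    have := hw j k
    push_cast at hj
    have : (0:ℤ) ≤ j := by positivity
    have : (cMax β k : ℤ) ≤ cMax β (k+1) := by linarith
    exact_mod_cast this
  have key := conj a (fun k => (cMax β k : ℤ)) (Fintype.card β) ?_
    (fun j => vals_le_card (ha j).1)
    (fun i j hij => mono_a (by exact_mod_cast hij) (ha i) (ha j))
    (fun j => concave_a (j := (j : ℤ)) (ha j) (by simpa using ha (j+1)) (by simpa using ha (j+2)))
    hw hs N hN j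
  · have e : ∀ i, (lam β (i+1) : ℤ) = (cMax β (i+1) : ℤ) - cMax β i := fun i => by
      rw [lam, Nat.add_sub_cancel, Nat.cast_sub (hmono i)]
    simp only [e]
    rw [key]
    exact ha j
  · apply le_antisymm
    · obtain ⟨u, v, h, he⟩ := (ha 0).1
      rw [he]
      refine Finset.sum_nonpos fun x _ => ?_
      have := h.1 x
      have := h.2.1 x
      push_cast at this
      linarith
    · exact (ha 0).2 ⟨_, _, feas_zero (by simp), by simp⟩

lemma restrict {α : Type*} [PartialOrder α] [Fintype α] (p : α → Prop) [DecidablePred p]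
    {j a : ℤ} (ha : IsGreatest (Vals {x // p x} j) a) {u v : α → ℤ} (h : Feas j u v)
    (hp : ∀ x, ¬ p x → v x ≤ u x) : ∑ x, (v x - u x) ≤ a := by
  have h1 := ha.2 ⟨fun x => u x, fun x => v x,
    ⟨fun x => h.1 x, fun x => h.2.1 x, fun x => h.2.2.1 x, fun x y hxy => h.2.2.2 x y hxy⟩, rfl⟩
  rw [← Fintype.sum_subtype_add_sum_subtype p]
  have h2 : ∑ x : {x // ¬ p x}, (v x - u x) ≤ 0 :=
    Finset.sum_nonpos fun x _ => by have := hp x x.2; linarith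
  linarith

lemma extend {α : Type*} [PartialOrder α] [Fintype α] (p : α → Prop) [DecidablePred p]
    {j z : ℤ} (hj : 0 ≤ j) (hz : z ∈ Vals {x // p x} j) (e : α → ℤ)
    (he : ∀ x, ¬ p x → (e x = j ∧ ∀ y, ¬ x < y) ∨ (e x = 0 ∧ ∀ y, ¬ y < x)) :
    ∃ u v : α → ℤ, Feas j u v ∧ z = ∑ x, (v x - u x) ∧ ∀ x, ¬ p x → u x = e x ∧ v x = e x := by
  obtain ⟨u, v, h, rfl⟩ := hz
  refine ⟨fun x => if h : p x then u ⟨x, h⟩ else e x, fun x => if h : p x then v ⟨x, h⟩ else e x,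
    ⟨fun x => ?_, fun x => ?_, fun x => ?_, fun x y hxy => ?_⟩, ?_, ?_⟩
  · by_cases hx : p x
    · simpa [hx] using h.1 ⟨x, hx⟩
    · simp only [hx, dite_false]
      rcases he x hx with ⟨h, _⟩ | ⟨h, _⟩ <;> omega
  · by_cases hx : p x
    · simpa [hx] using h.2.1 ⟨x, hx⟩
    · simp only [hx, dite_false]
      rcases he x hx with ⟨h, _⟩ | ⟨h, _⟩ <;> omega
  · by_cases hx : p x
    · simpa [hx] using h.2.2.1 ⟨x, hx⟩
    · simp only [hx, dite_false]
      omega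
  · by_cases hx : p x <;> by_cases hy : p y
    · simpa [hx, hy] using h.2.2.2 ⟨x, hx⟩ ⟨y, hy⟩ hxy
    · simp only [hx, hy, dite_false, dite_true]
      have := h.2.1 ⟨x, hx⟩
      rcases he y hy with ⟨h, _⟩ | ⟨_, h⟩
      · omega
      · exact absurd hxy (h x)
    · simp only [hx, hy, dite_false, dite_true]
      have := h.1 ⟨y, hy⟩
      rcases he x hx with ⟨_, h⟩ | ⟨h, _⟩
      · exact absurd hxy (h y)
      · omega
    · simp only [hx, hy, dite_false]
      rcases he x hx with ⟨_, h⟩ | ⟨h, _⟩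
      · exact absurd hxy (h y)
      · rcases he y hy with ⟨h', _⟩ | ⟨h', _⟩ <;> omega
  · rw [← Fintype.sum_subtype_add_sum_subtype p]
    rw [Finset.sum_eq_zero (s := (Finset.univ : Finset {x // ¬ p x}))
      fun x _ => by simp only [x.2, dite_false, sub_self]]
    rw [add_zero]
    exact Finset.sum_congr rfl fun x _ => by simp only [x.2, dite_true]
  · intro x hx
    simp [hx]

lemma ineq1 {α : Type*} [PartialOrder α] [Fintype α] [DecidableEq α] (p₁ p₂ : α) (hne : p₁ ≠ p₂)
    (h₁ : ∀ x : α, ¬ p₁ < x) (h₂ : ∀ x : α, ¬ x < p₂) {k : ℤ} (hk : 0 ≤ k) {a a1 a2 a12 : ℤ}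
    (ha : IsGreatest (Vals α k) a) (ha1 : IsGreatest (Vals {x : α // x ≠ p₁} k) a1)
    (ha2 : IsGreatest (Vals {x : α // x ≠ p₂} k) a2)
    (ha12 : IsGreatest (Vals {x : α // x ≠ p₁ ∧ x ≠ p₂} k) a12) :
    a + a12 ≤ a1 + a2 := by
  obtain ⟨u, v, h, rfl⟩ := ha.1
  obtain ⟨u', v', h', rfl, he⟩ := extend _ hk ha12.1 (fun x => if x = p₁ then k else 0) (by
    intro x hx
    by_cases hx1 : x = p₁
    · subst hx1; left; exact ⟨by simp, h₁⟩
    · have : x = p₂ := by by_contra h; exact hx ⟨hx1, h⟩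
      subst this; right; exact ⟨by simp [hx1], h₂⟩)
  have e1 := he p₁ (by simp)
  have e2 := he p₂ (by simp)
  simp only [if_true, if_neg hne.symm] at e1 e2
  have f1 := feas_inf h h'
  have f2 := feas_sup h h'
  rw [min_self] at f1
  rw [max_self] at f2
  have g1 := restrict _ ha2 f1 (by
    intro x hx
    have hx : x = p₂ := by simpa using hx
    subst hx
    have := h.1 x
    omega)
  have g2 := restrict _ ha1 f2 (by
    intro x hx
    have hx : x = p₁ := by simpa using hx
    subst hx
    have := h.2.1 x
    omega)
  have := sum_inf_sup u v u' v'
  linarith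

lemma raise {α : Type*} [PartialOrder α] [Fintype α] [DecidableEq α] (p₁ : α)
    (h₁ : ∀ x : α, ¬ p₁ < x) {k : ℤ} (hk : 0 ≤ k) {u v : α → ℤ} (h : Feas (k+1) u v) :
    ∃ u' v' : α → ℤ, Feas (k+1) u' v' ∧ ∑ x, (v x - u x) ≤ ∑ x, (v' x - u' x) ∧ k ≤ u' p₁ ∧
      ∀ x, x ≠ p₁ → u' x = u x ∧ v' x = v x := by
  refine ⟨Function.update u p₁ (max (u p₁) k), Function.update v p₁ (k+1),
    ⟨fun x => ?_, fun x => ?_, fun x => ?_, fun x y hxy => ?_⟩, ?_, ?_, ?_⟩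
  · by_cases hx : x = p₁
    · subst hx; simp [hk]
    · simpa [hx] using h.1 x
  · by_cases hx : x = p₁
    · subst hx; simp
    · simpa [hx] using h.2.1 x
  · by_cases hx : x = p₁
    · subst hx; simp
    · simpa [hx] using h.2.2.1 x
  · have hx : x ≠ p₁ := by rintro rfl; exact h₁ _ hxy
    have := h.2.2.2 x y hxy
    by_cases hy : y = p₁
    · subst hy; simp [hx, this]
    · simpa [hx, hy] using this
  · refine Finset.sum_le_sum fun x _ => ?_
    by_cases hx : x = p₁
    · subst hx
      have := h.2.1 x
      have := h.2.2.1 x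
      simp only [Function.update_self]
      omega
    · simp [hx]
  · simp
  · intro x hx
    simp [hx]

lemma ineq2 {α : Type*} [PartialOrder α] [Fintype α] [DecidableEq α] (p₁ p₂ : α) (hne : p₁ ≠ p₂)
    (h₁ : ∀ x : α, ¬ p₁ < x) (h₂ : ∀ x : α, ¬ x < p₂) {k : ℤ} (hk : 0 ≤ k) {a a1 a2 a12 : ℤ}
    (ha : IsGreatest (Vals α (k+1)) a) (ha1 : IsGreatest (Vals {x : α // x ≠ p₁} k) a1)
    (ha2 : IsGreatest (Vals {x : α // x ≠ p₂} (k+1)) a2)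
    (ha12 : IsGreatest (Vals {x : α // x ≠ p₁ ∧ x ≠ p₂} k) a12) :
    a1 + a2 ≤ a + a12 := by
  obtain ⟨u, v, h, rfl, he⟩ := extend _ hk ha1.1 (fun x => k) (by
    intro x hx
    have hx : x = p₁ := by simpa using hx
    subst hx; left; exact ⟨rfl, h₁⟩)
  obtain ⟨u₀, v₀, h₀, rfl, he₀⟩ := extend _ (by omega) ha2.1 (fun x => 0) (by
    intro x hx
    have hx : x = p₂ := by simpa using hx
    subst hx; right; exact ⟨rfl, h₂⟩)
  obtain ⟨u', v', h', hle, hku, hr⟩ := raise p₁ h₁ hk h₀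
  have e1 := he p₁ (by simp)
  have e2 := he₀ p₂ (by simp)
  have e3 := hr p₂ hne.symm
  have f1 := feas_inf h h'
  have f2 := feas_sup h h'
  rw [min_eq_left (by omega)] at f1
  rw [max_eq_right (by omega)] at f2
  have g1 := restrict _ ha12 f1 (by
    intro x hx
    by_cases hx1 : x = p₁
    · subst hx1
      omega
    · have : x = p₂ := by by_contra h; exact hx ⟨hx1, h⟩
      subst this
      have := h.1 x
      omega)
  have g2 := ha.2 ⟨_, _, f2, rfl⟩
  have := sum_inf_sup u v u' v'
  linarith

lemma sum_drop (l l' : ℕ → ℕ) (y N : ℕ) (hy : 1 ≤ y) (hyN : y ≤ N) (hp : 1 ≤ l y)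
    (h : ∀ i, l' i = l i - (if i = y then 1 else 0)) (j : ℕ) :
    ∑ i ∈ Finset.range N, min (l (i+1) : ℤ) j
      = ∑ i ∈ Finset.range N, min (l' (i+1) : ℤ) j + if l y ≤ j then 1 else 0 := by
  have e : ∀ i ∈ Finset.range N, min (l (i+1) : ℤ) j
      = min (l' (i+1) : ℤ) j + if i = y - 1 then (if l y ≤ j then 1 else 0) else 0 := by
    intro i _
    rw [h]
    by_cases hi : i = y - 1
    · have hi' : i + 1 = y := by omega
      rw [hi']
      simp only [hi, if_true]
      split_ifs <;> omega
    · have hi' : i + 1 ≠ y := by omega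
      simp [hi, hi']
  rw [Finset.sum_congr rfl e, Finset.sum_add_distrib, Finset.sum_ite_eq',
    if_pos (Finset.mem_range.2 (by omega))]

theorem max_min_elements_box_rule
    (α : Type*) [PartialOrder α] [Fintype α] [DecidableEq α]
    (p₁ p₂ : α) (hne : p₁ ≠ p₂)
    (h₁ : ∀ x : α, p₁ ≤ x → x = p₁) (h₂ : ∀ x : α, x ≤ p₂ → x = p₂)
    (yB yA : ℕ) (hyB : 1 ≤ yB) (hyA : 1 ≤ yA)
    (hBpos : 1 ≤ lam α yB) (hApos : 1 ≤ lam {x : α // x ≠ p₁} yA)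
    (hB1 : ∀ i : ℕ, lam {x : α // x ≠ p₁} i = lam α i - (if i = yB then 1 else 0))
    (hB2 : ∀ i : ℕ, lam {x : α // x ≠ p₂} i = lam α i - (if i = yB then 1 else 0))
    (hA : ∀ i : ℕ, lam {x : α // x ≠ p₁ ∧ x ≠ p₂} i
        = lam {x : α // x ≠ p₁} i - (if i = yA then 1 else 0)) :
    lam {x : α // x ≠ p₁} yA ≤ lam α yB ∧
    lam α yB ≤ lam {x : α // x ≠ p₁} yA + 1 := by
  have hm₁ : ∀ x : α, ¬ p₁ < x := fun x hx => hx.ne (h₁ x hx.le).symm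
  have hm₂ : ∀ x : α, ¬ x < p₂ := fun x hx => hx.ne (h₂ x hx.le)
  set N := Fintype.card α + yA + yB with hN
  have c0 : Fintype.card α ≤ N := by omega
  have G := greene α N c0
  have G1 := greene {x : α // x ≠ p₁} N ((Fintype.card_subtype_le _).trans c0)
  have G2 := greene {x : α // x ≠ p₂} N ((Fintype.card_subtype_le _).trans c0)
  have G12 := greene {x : α // x ≠ p₁ ∧ x ≠ p₂} N ((Fintype.card_subtype_le _).trans c0)
  have d1 := sum_drop _ _ yB N hyB (by omega) hBpos hB1
  have d2 := sum_drop _ _ yB N hyB (by omega) hBpos hB2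
  have d12 := sum_drop _ _ yA N hyA (by omega) hApos hA
  constructor
  · by_contra hlt
    have i1 := ineq1 p₁ p₂ hne hm₁ hm₂ (by positivity) (G (lam α yB)) (G1 _) (G2 _) (G12 _)
    have e1 := d2 (lam α yB)
    have e2 := d12 (lam α yB)
    rw [if_pos le_rfl] at e1
    rw [if_neg hlt] at e2
    linarith
  · by_contra hlt
    have i1 := ineq2 (k := (lam {x : α // x ≠ p₁} yA : ℕ)) p₁ p₂ hne hm₁ hm₂ (by positivity)
      (by exact_mod_cast G (lam {x : α // x ≠ p₁} yA + 1)) (G1 _)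
      (by exact_mod_cast G2 (lam {x : α // x ≠ p₁} yA + 1)) (G12 _)
    have e1 := d2 (lam {x : α // x ≠ p₁} yA + 1)
    have e2 := d12 (lam {x : α // x ≠ p₁} yA)
    rw [if_pos le_rfl] at e2
    rw [if_neg hlt] at e1
    push_cast at *
    linarith
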